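/- arXiv:2302.14151 — 3 statements merged into one kernel-verified Lean document; each statement's English description precedes it below -/
import Mathlib

section
/- Let π̄ be an extreme point of C^l (the general-m cone over a network polytope). Define N = {v ∈ V : γ_j⁺(v) > 0 or γ_j⁻(v) > 0 for some j ∈ M, or θ⁺(v) > 0 or θ⁻(v) > 0} (the nodes whose flow-balance constraints carry positive weight) and J̃ = {a ∈ A : λ(a) > 0 or μ(a) > 0} (the connection arcs). If N ≠ ∅, then N induces a connected subgraph of the underlying undirected graph of G (the collection of all used nodes forms a tree in G), and every connection arc a ∈ J̃ with a ≠ i' is incident to at least one node of N. -/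
/-- Weight vector for the general-`m` EC&R projection cone over a network polytope:
components `γ_j⁺ γ_j⁻ : V → ℝ` and `η_j ρ_j : A → ℝ` for each `j ∈ M`, then
`θ⁺ θ⁻ : V → ℝ`, `λ μ : A → ℝ` and `β⁺ β⁻ : K → ℝ`, in this order. -/
abbrev ECRWeights (M V A K : Type) : Type :=
  (M → V → ℝ) × (M → V → ℝ) × (M → A → ℝ) × (M → A → ℝ) ×
  (V → ℝ) × (V → ℝ) × (A → ℝ) × (A → ℝ) × (K → ℝ) × (K → ℝ)

namespace ECRWeights

variable {M V A K : Type}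

def γp (w : ECRWeights M V A K) : M → V → ℝ := w.1
def γm (w : ECRWeights M V A K) : M → V → ℝ := w.2.1
def η (w : ECRWeights M V A K) : M → A → ℝ := w.2.2.1
def ρ (w : ECRWeights M V A K) : M → A → ℝ := w.2.2.2.1
def θp (w : ECRWeights M V A K) : V → ℝ := w.2.2.2.2.1
def θm (w : ECRWeights M V A K) : V → ℝ := w.2.2.2.2.2.1
def lam (w : ECRWeights M V A K) : A → ℝ := w.2.2.2.2.2.2.1
def mu (w : ECRWeights M V A K) : A → ℝ := w.2.2.2.2.2.2.2.1
def βp (w : ECRWeights M V A K) : K → ℝ := w.2.2.2.2.2.2.2.2.1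
def βm (w : ECRWeights M V A K) : K → ℝ := w.2.2.2.2.2.2.2.2.2

end ECRWeights

open ECRWeights in
/-- Membership in the normalized projection-cone restriction `C^l` for the general-`m`
case: nonnegativity, `β⁺ l = β⁻ l = 0`, and for every row `(a, j) ∈ A × M` the aggregation
equation with right-hand side `s·[(a, j) = (i', j')]` where `i' = ic l`, `j' = jc l`. -/
def memCl {M V A K : Type} [Fintype V] [Fintype K]
    [DecidableEq M] [DecidableEq A] [DecidableEq K]
    (E : V → A → ℝ) (jc : K → M) (ic : K → A) (l : K) (s : ℝ)
    (w : ECRWeights M V A K) : Prop :=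
  (∀ j v, 0 ≤ γp w j v) ∧ (∀ j v, 0 ≤ γm w j v) ∧
  (∀ j a, 0 ≤ η w j a) ∧ (∀ j a, 0 ≤ ρ w j a) ∧
  (∀ v, 0 ≤ θp w v) ∧ (∀ v, 0 ≤ θm w v) ∧
  (∀ a, 0 ≤ lam w a) ∧ (∀ a, 0 ≤ mu w a) ∧
  (∀ k, 0 ≤ βp w k) ∧ (∀ k, 0 ≤ βm w k) ∧
  βp w l = 0 ∧ βm w l = 0 ∧
  ∀ a j, (∑ k ∈ Finset.univ.filter (fun k => jc k = j ∧ ic k = a), (βp w k - βm w k))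
      + (∑ v, E v a * ((γp w j v - γm w j v) - (θp w v - θm w v)))
      + η w j a - ρ w j a - lam w a + mu w a
      = s * (if (a, j) = (ic l, jc l) then 1 else 0)

namespace ECRAux

open ECRWeights

variable {M V A K : Type}

/-- Scale node weights by `1 + e * f v` and arc-indexed weights by `1 + e * g a`. -/
noncomputable def scale (ic : K → A) (f : V → ℝ) (g : A → ℝ) (e : ℝ) (w : ECRWeights M V A K) :
    ECRWeights M V A K :=
  (fun j v => (1 + e * f v) * γp w j v, fun j v => (1 + e * f v) * γm w j v,
   fun j a => (1 + e * g a) * η w j a, fun j a => (1 + e * g a) * ρ w j a,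
   fun v => (1 + e * f v) * θp w v, fun v => (1 + e * f v) * θm w v,
   fun a => (1 + e * g a) * lam w a, fun a => (1 + e * g a) * mu w a,
   fun k => (1 + e * g (ic k)) * βp w k, fun k => (1 + e * g (ic k)) * βm w k)

theorem scale_mem [Fintype V] [Fintype K]
    [DecidableEq M] [DecidableEq A] [DecidableEq K]
    (E : V → A → ℝ) (jc : K → M) (ic : K → A) (l : K) (s : ℝ)
    (w : ECRWeights M V A K) (hw : memCl E jc ic l s w)
    (f : V → ℝ) (g : A → ℝ) (e : ℝ)
    (hf : ∀ v, 0 ≤ 1 + e * f v) (hg : ∀ a, 0 ≤ 1 + e * g a) (hl : g (ic l) = 0)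
    (hfg : ∀ a v, E v a ≠ 0 →
      ((∃ j, 0 < γp w j v ∨ 0 < γm w j v) ∨ 0 < θp w v ∨ 0 < θm w v) → f v = g a) :
    memCl E jc ic l s (scale ic f g e w) := by
  obtain ⟨h1, h2, h3, h4, h5, h6, h7, h8, h9, h10, h11, h12, h13⟩ := hw
  refine ⟨fun j v => mul_nonneg (hf v) (h1 j v), fun j v => mul_nonneg (hf v) (h2 j v),
    fun j v => mul_nonneg (hg v) (h3 j v), fun j v => mul_nonneg (hg v) (h4 j v),
    fun v => mul_nonneg (hf v) (h5 v), fun v => mul_nonneg (hf v) (h6 v),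
    fun v => mul_nonneg (hg v) (h7 v), fun v => mul_nonneg (hg v) (h8 v),
    fun v => mul_nonneg (hg _) (h9 v), fun v => mul_nonneg (hg _) (h10 v),
    mul_eq_zero_of_right _ h11, mul_eq_zero_of_right _ h12, fun a j => ?_⟩
  have hr := h13 a j
  have e1 : (∑ k ∈ Finset.univ.filter (fun k => jc k = j ∧ ic k = a),
      (βp (scale ic f g e w) k - βm (scale ic f g e w) k))
      = (1 + e * g a) * ∑ k ∈ Finset.univ.filter (fun k => jc k = j ∧ ic k = a),
        (βp w k - βm w k) := by
    rw [Finset.mul_sum]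
    refine Finset.sum_congr rfl fun k hk => ?_
    have hk' := (Finset.mem_filter.1 hk).2.2
    change (1 + e * g (ic k)) * βp w k - (1 + e * g (ic k)) * βm w k = _
    rw [hk']; ring
  have e2 : (∑ v, E v a * ((γp (scale ic f g e w) j v - γm (scale ic f g e w) j v)
        - (θp (scale ic f g e w) v - θm (scale ic f g e w) v)))
      = (1 + e * g a) * ∑ v, E v a * ((γp w j v - γm w j v) - (θp w v - θm w v)) := by
    rw [Finset.mul_sum]
    refine Finset.sum_congr rfl fun v _ => ?_
    change E v a * (((1 + e * f v) * γp w j v - (1 + e * f v) * γm w j v)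
      - ((1 + e * f v) * θp w v - (1 + e * f v) * θm w v)) = _
    by_cases hE : E v a = 0
    · simp [hE]
    by_cases hv : (∃ j, 0 < γp w j v ∨ 0 < γm w j v) ∨ 0 < θp w v ∨ 0 < θm w v
    · rw [hfg a v hE hv]; ring
    · push Not at hv
      obtain ⟨hv1, hv2, hv3⟩ := hv
      rw [le_antisymm (hv1 j).1 (h1 j v), le_antisymm (hv1 j).2 (h2 j v),
        le_antisymm hv2 (h5 v), le_antisymm hv3 (h6 v)]
      ring
  rw [e1, e2]
  change _ + (1 + e * g a) * η w j a - (1 + e * g a) * ρ w j a - (1 + e * g a) * lam w a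
    + (1 + e * g a) * mu w a = _
  have hz : g a * (s * (if (a, j) = (ic l, jc l) then 1 else 0)) = 0 := by
    by_cases hc : (a, j) = (ic l, jc l)
    · have : a = ic l := congrArg Prod.fst hc
      rw [this, hl, zero_mul]
    · rw [if_neg hc]; ring
  linear_combination (1 + e * g a) * hr + e * hz

theorem scale_eq [Fintype V] [Fintype K]
    [DecidableEq M] [DecidableEq A] [DecidableEq K]
    (E : V → A → ℝ) (jc : K → M) (ic : K → A) (l : K) (s : ℝ)
    (w : ECRWeights M V A K)
    (hw : w ∈ Set.extremePoints ℝ {w' : ECRWeights M V A K | memCl E jc ic l s w'})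
    (f : V → ℝ) (g : A → ℝ)
    (hf : ∀ v, f v = 0 ∨ f v = 1) (hg : ∀ a, g a = 0 ∨ g a = 1) (hl : g (ic l) = 0)
    (hfg : ∀ a v, E v a ≠ 0 →
      ((∃ j, 0 < γp w j v ∨ 0 < γm w j v) ∨ 0 < θp w v ∨ 0 < θm w v) → f v = g a) :
    scale ic f g 1 w = w := by
  rw [mem_extremePoints] at hw
  obtain ⟨hm, hx⟩ := hw
  have p1 : memCl E jc ic l s (scale ic f g 1 w) := scale_mem E jc ic l s w hm f g 1
    (fun v => by rcases hf v with h | h <;> rw [h] <;> norm_num)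
    (fun v => by rcases hg v with h | h <;> rw [h] <;> norm_num) hl hfg
  have p2 : memCl E jc ic l s (scale ic f g (-1) w) := scale_mem E jc ic l s w hm f g (-1)
    (fun v => by rcases hf v with h | h <;> rw [h] <;> norm_num)
    (fun v => by rcases hg v with h | h <;> rw [h] <;> norm_num) hl hfg
  refine (hx _ p1 _ p2 ⟨1/2, 1/2, by norm_num, by norm_num, by norm_num, ?_⟩).1
  obtain ⟨w1, w2, w3, w4, w5, w6, w7, w8, w9, w10⟩ := w
  simp only [scale, γp, γm, η, ρ, θp, θm, lam, mu, βp, βm, Prod.smul_mk, Prod.mk_add_mk,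
    Prod.mk.injEq]
  refine ⟨?_, ?_, ?_, ?_, ?_, ?_, ?_, ?_, ?_, ?_⟩
  all_goals
    first
    | (funext x y; simp only [Pi.add_apply, Pi.smul_apply, smul_eq_mul]; ring)
    | (funext x; simp only [Pi.add_apply, Pi.smul_apply, smul_eq_mul]; ring)

end ECRAux

open ECRWeights in
/-- At an extreme point of `C^l` (the general-`m` cone over a network polytope), the set
`N` of nodes whose flow-balance constraints carry positive weight, if nonempty, induces a
connected subgraph of the underlying undirected graph of `G` (the collection of all used
nodes forms a tree in `G`), and every connection arc `a ∈ J̃` with `a ≠ i'` is incident to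
at least one node of `N`. -/
theorem extremePoint_mem_Cl_support_nodes_form_tree
    {M V A K : Type} [Fintype M] [Fintype V] [Fintype A] [Fintype K]
    [DecidableEq M] [DecidableEq V] [DecidableEq A] [DecidableEq K]
    (t h : A → V) (hloop : ∀ a, t a ≠ h a)
    (E : V → A → ℝ)
    (hE : ∀ v a, E v a = (if t a = v then (1 : ℝ) else 0) - (if h a = v then 1 else 0))
    (jc : K → M) (ic : K → A) (l : K) (s : ℝ) (hs : s = 1 ∨ s = -1)
    (w : ECRWeights M V A K)
    (hw : w ∈ Set.extremePoints ℝ {w' : ECRWeights M V A K | memCl E jc ic l s w'})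
    (N : Set V)
    (hN : N = {v | (∃ j, 0 < γp w j v ∨ 0 < γm w j v) ∨ 0 < θp w v ∨ 0 < θm w v})
    (J : Set A) (hJ : J = {a | 0 < lam w a ∨ 0 < mu w a})
    (hne : N.Nonempty) :
    (∀ u ∈ N, ∀ v ∈ N, Relation.ReflTransGen
      (fun x y => x ∈ N ∧ y ∈ N ∧ x ≠ y ∧
        ∃ a, (t a = x ∨ h a = x) ∧ (t a = y ∨ h a = y)) u v) ∧
    (∀ a ∈ J, a ≠ ic l → (t a ∈ N ∨ h a ∈ N)) := by
  classical
  have hinc : ∀ a v, E v a ≠ 0 → t a = v ∨ h a = v := by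
    intro a v hv
    by_contra hc
    push Not at hc
    apply hv
    rw [hE, if_neg hc.1, if_neg hc.2, sub_zero]
  have hNm : ∀ v, v ∈ N ↔
      ((∃ j, 0 < γp w j v ∨ 0 < γm w j v) ∨ 0 < θp w v ∨ 0 < θm w v) := by
    intro v; rw [hN]; rfl
  constructor
  · -- a closed set of used nodes that `ic l` does not touch is empty
    have key : ∀ S : Set V, S ⊆ N →
        (∀ x ∈ S, ∀ y ∈ N, y ∉ S → ∀ a, (t a = x ∨ h a = x) → (t a = y ∨ h a = y) → False) →
        ¬ (t (ic l) ∈ S ∨ h (ic l) ∈ S) → ∀ v, v ∉ S := by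
      intro S hSN hcl hi v hvS
      have heq := ECRAux.scale_eq E jc ic l s w hw
        (fun v => if v ∈ S then 1 else 0) (fun a => if t a ∈ S ∨ h a ∈ S then 1 else 0)
        (fun v => by by_cases hh : v ∈ S <;> simp [hh])
        (fun a => by by_cases hh : t a ∈ S ∨ h a ∈ S <;> simp only [hh] <;> simp)
        (if_neg hi) (by
          intro a x hx hxN
          have hxN' := (hNm x).2 hxN
          have hax := hinc a x hx
          by_cases hxS : x ∈ S
          · have : t a ∈ S ∨ h a ∈ S := by
              rcases hax with h1 | h1
              · left; rw [h1]; exact hxS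
              · right; rw [h1]; exact hxS
            simp only [hxS, this, if_true]
          · have : ¬ (t a ∈ S ∨ h a ∈ S) := by
              rintro (h1 | h1)
              · exact hcl _ h1 x hxN' hxS a (Or.inl rfl) hax
              · exact hcl _ h1 x hxN' hxS a (Or.inr rfl) hax
            simp only [hxS, this, if_false])
      have q1 : ∀ j, (1 + 1 * (if v ∈ S then (1:ℝ) else 0)) * γp w j v = γp w j v :=
        fun j => congrArg (fun w' => γp w' j v) heq
      have q2 : ∀ j, (1 + 1 * (if v ∈ S then (1:ℝ) else 0)) * γm w j v = γm w j v :=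
        fun j => congrArg (fun w' => γm w' j v) heq
      have q3 : (1 + 1 * (if v ∈ S then (1:ℝ) else 0)) * θp w v = θp w v :=
        congrArg (fun w' => θp w' v) heq
      have q4 : (1 + 1 * (if v ∈ S then (1:ℝ) else 0)) * θm w v = θm w v :=
        congrArg (fun w' => θm w' v) heq
      simp only [hvS, if_true] at q1 q2 q3 q4
      rcases (hNm v).1 (hSN hvS) with ⟨j, h1 | h1⟩ | h1 | h1
      · linarith [q1 j]
      · linarith [q2 j]
      · linarith
      · linarith
    intro u hu v hv
    by_contra hnot
    let R : V → V → Prop := fun x y => x ∈ N ∧ y ∈ N ∧ x ≠ y ∧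
        ∃ a, (t a = x ∨ h a = x) ∧ (t a = y ∨ h a = y)
    let C : Set V := {x | x ∈ N ∧ Relation.ReflTransGen R u x}
    have hstep : ∀ x ∈ C, ∀ y ∈ N, y ∉ C → ∀ a, (t a = x ∨ h a = x) →
        (t a = y ∨ h a = y) → False := by
      intro x hx y hy hyC a h1 h2
      apply hyC
      refine ⟨hy, hx.2.tail ⟨hx.1, hy, ?_, a, h1, h2⟩⟩
      rintro rfl
      exact hyC hx
    by_cases hi : t (ic l) ∈ C ∨ h (ic l) ∈ C
    · refine key (N \ C) Set.diff_subset ?_ ?_ v ⟨hv, fun hc => hnot hc.2⟩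
      · intro x hx y hy hyS a h1 h2
        have hyC : y ∈ C := by
          by_contra hc
          exact hyS ⟨hy, hc⟩
        exact hstep y hyC x hx.1 hx.2 a h2 h1
      · rintro (h2 | h2) <;> rcases hi with h1 | h1
        · exact h2.2 h1
        · exact hstep _ h1 _ h2.1 h2.2 (ic l) (Or.inr rfl) (Or.inl rfl)
        · exact hstep _ h1 _ h2.1 h2.2 (ic l) (Or.inl rfl) (Or.inr rfl)
        · exact h2.2 h1
    · exact key C (fun x hx => hx.1) hstep hi u ⟨hu, Relation.ReflTransGen.refl⟩
  · intro a haJ hal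
    by_contra hno
    have heq := ECRAux.scale_eq E jc ic l s w hw
      (fun _ => 0) (fun b => if b = a then 1 else 0)
      (fun v => Or.inl rfl)
      (fun b => by by_cases hh : b = a <;> simp [hh])
      (if_neg (Ne.symm hal)) (by
        intro b x hx hxN
        have hxN' := (hNm x).2 hxN
        have hba : b ≠ a := by
          rintro rfl
          apply hno
          rcases hinc b x hx with h1 | h1
          · left; rw [h1]; exact hxN'
          · right; rw [h1]; exact hxN'
        simp [hba])
    have q1 : (1 + 1 * (if a = a then (1:ℝ) else 0)) * lam w a = lam w a :=
      congrArg (fun w' => lam w' a) heq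
    have q2 : (1 + 1 * (if a = a then (1:ℝ) else 0)) * mu w a = mu w a :=
      congrArg (fun w' => mu w' a) heq
    simp only [if_true] at q1 q2
    rw [hJ] at haJ
    rcases haJ with h1 | h1 <;> linarith
end

section
/- Let π̄ be an extreme point of C^l (the general-m cone over a network polytope) that satisfies the pairwise-cancellation property. Then every component of π̄ lies in {0,1}; i.e., the aggregation weights of all constraints used in an EC&R assignment obtained through pairwise cancellation are equal to 1. -/
/-- Column (component) index type for the linear system defining `C^l`:
`γ_j⁺(v), γ_j⁻(v), η_j(a), ρ_j(a), θ⁺(v), θ⁻(v), λ(a), μ(a), β⁺(k), β⁻(k)`. -/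
abbrev ECRCol (M V A K : Type) : Type :=
  (M × V) ⊕ (M × V) ⊕ (M × A) ⊕ (M × A) ⊕ V ⊕ V ⊕ A ⊕ A ⊕ K ⊕ K

open ECRWeights in
/-- The value of the component of the weight vector `w` indexed by a column. -/
def colVal {M V A K : Type} (w : ECRWeights M V A K) : ECRCol M V A K → ℝ :=
  Sum.elim (fun jv => γp w jv.1 jv.2)
    (Sum.elim (fun jv => γm w jv.1 jv.2)
      (Sum.elim (fun ja => η w ja.1 ja.2)
        (Sum.elim (fun ja => ρ w ja.1 ja.2)
          (Sum.elim (fun v => θp w v)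
            (Sum.elim (fun v => θm w v)
              (Sum.elim (fun a => lam w a)
                (Sum.elim (fun a => mu w a)
                  (Sum.elim (fun k => βp w k) (fun k => βm w k)))))))))

/-- `covers E jc ic c r` holds when the column `c` of the linear system defining `C^l` has
a nonzero coefficient in the row `r = (a, j)`. -/
def covers {M V A K : Type} (E : V → A → ℝ) (jc : K → M) (ic : K → A) :
    ECRCol M V A K → A × M → Prop :=
  Sum.elim (fun jv r => jv.1 = r.2 ∧ E jv.2 r.1 ≠ 0)
    (Sum.elim (fun jv r => jv.1 = r.2 ∧ E jv.2 r.1 ≠ 0)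
      (Sum.elim (fun ja r => ja.1 = r.2 ∧ ja.2 = r.1)
        (Sum.elim (fun ja r => ja.1 = r.2 ∧ ja.2 = r.1)
          (Sum.elim (fun v r => E v r.1 ≠ 0)
            (Sum.elim (fun v r => E v r.1 ≠ 0)
              (Sum.elim (fun a r => a = r.1)
                (Sum.elim (fun a r => a = r.1)
                  (Sum.elim (fun k r => jc k = r.2 ∧ ic k = r.1)
                    (fun k r => jc k = r.2 ∧ ic k = r.1)))))))))

/-- `w` satisfies the pairwise-cancellation property when every row of the linear system
defining `C^l` is covered by at most two positive components of `w` and the base row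
`(i', j') = (ic l, jc l)` is covered by at most one positive component of `w`. -/
def PairwiseCancellation {M V A K : Type} (E : V → A → ℝ) (jc : K → M) (ic : K → A)
    (l : K) (w : ECRWeights M V A K) : Prop :=
  (∀ r : A × M,
    Set.ncard {c : ECRCol M V A K | 0 < colVal w c ∧ covers E jc ic c r} ≤ 2) ∧
  Set.ncard {c : ECRCol M V A K | 0 < colVal w c ∧ covers E jc ic c (ic l, jc l)} ≤ 1

/-- Coefficient of the column `c` in the row `r`. -/
def ecrCoef {M V A K : Type} [DecidableEq M] [DecidableEq A]
    (E : V → A → ℝ) (jc : K → M) (ic : K → A) :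
    ECRCol M V A K → A × M → ℝ :=
  Sum.elim (fun jv r => if jv.1 = r.2 then E jv.2 r.1 else 0)
    (Sum.elim (fun jv r => if jv.1 = r.2 then - E jv.2 r.1 else 0)
      (Sum.elim (fun ja r => if ja.1 = r.2 ∧ ja.2 = r.1 then 1 else 0)
        (Sum.elim (fun ja r => if ja.1 = r.2 ∧ ja.2 = r.1 then -1 else 0)
          (Sum.elim (fun v r => - E v r.1)
            (Sum.elim (fun v r => E v r.1)
              (Sum.elim (fun a r => if a = r.1 then -1 else 0)
                (Sum.elim (fun a r => if a = r.1 then 1 else 0)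
                  (Sum.elim (fun k r => if jc k = r.2 ∧ ic k = r.1 then 1 else 0)
                    (fun k r => if jc k = r.2 ∧ ic k = r.1 then -1 else 0)))))))))

open ECRWeights in
/-- Apply a function to every component. -/
def ecrMap {M V A K : Type} (F : ℝ → ℝ) (w : ECRWeights M V A K) : ECRWeights M V A K :=
  (fun j v => F (γp w j v), fun j v => F (γm w j v), fun j a => F (η w j a),
    fun j a => F (ρ w j a), fun v => F (θp w v), fun v => F (θm w v),
    fun a => F (lam w a), fun a => F (mu w a), fun k => F (βp w k), fun k => F (βm w k))

theorem colVal_ecrMap {M V A K : Type} (F : ℝ → ℝ) (w : ECRWeights M V A K)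
    (c : ECRCol M V A K) : colVal (ecrMap F w) c = F (colVal w c) := by
  rcases c with c | c | c | c | c | c | c | c | c | c <;> rfl

theorem covers_iff_ecrCoef {M V A K : Type} [DecidableEq M] [DecidableEq A]
    (E : V → A → ℝ) (jc : K → M) (ic : K → A) (c : ECRCol M V A K) (r : A × M) :
    covers E jc ic c r ↔ ecrCoef E jc ic c r ≠ 0 := by
  rcases c with c | c | c | c | c | c | c | c | c | c <;> simp [covers, ecrCoef]

theorem ecrCoef_cases {M V A K : Type} [DecidableEq M] [DecidableEq A]
    (E : V → A → ℝ) (hE : ∀ v a, E v a = 0 ∨ E v a = 1 ∨ E v a = -1)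
    (jc : K → M) (ic : K → A) (c : ECRCol M V A K) (r : A × M) :
    ecrCoef E jc ic c r = 0 ∨ ecrCoef E jc ic c r = 1 ∨ ecrCoef E jc ic c r = -1 := by
  rcases c with c | c | c | c | c | c | c | c | c | c <;> simp only [ecrCoef, Sum.elim_inl, Sum.elim_inr]
  · split_ifs
    · exact hE _ _
    · simp
  · split_ifs
    · rcases hE c.2 r.1 with h | h | h <;> simp [h]
    · simp
  · split_ifs <;> simp
  · split_ifs <;> simp
  · rcases hE c r.1 with h | h | h <;> simp [h]
  · exact hE _ _
  all_goals split_ifs <;> simp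

open ECRWeights in
theorem ecr_row {M V A K : Type} [Fintype M] [Fintype V] [Fintype A] [Fintype K]
    [DecidableEq M] [DecidableEq A]
    (E : V → A → ℝ) (jc : K → M) (ic : K → A) (w : ECRWeights M V A K) (a : A) (j : M) :
    (∑ k ∈ Finset.univ.filter (fun k => jc k = j ∧ ic k = a), (βp w k - βm w k))
      + (∑ v, E v a * ((γp w j v - γm w j v) - (θp w v - θm w v)))
      + η w j a - ρ w j a - lam w a + mu w a
    = ∑ c, ecrCoef E jc ic c (a, j) * colVal w c := by
  have e1 : ∀ f : M × V → ℝ, ∑ x : M × V, (if x.1 = j then f x else 0) = ∑ v, f (j, v) := by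
    intro f
    rw [Fintype.sum_prod_type_right]
    simp
  have e2 : ∀ f : M × A → ℝ, ∑ x : M × A, (if x.1 = j ∧ x.2 = a then f x else 0) = f (j, a) := by
    intro f
    have : ∀ x : M × A, (x.1 = j ∧ x.2 = a) ↔ x = (j, a) := by
      intro x; rw [Prod.ext_iff]
    simp [this]
  simp only [Fintype.sum_sum_type, ecrCoef, colVal, Sum.elim_inl, Sum.elim_inr, ite_mul, zero_mul,
    e1, e2, Finset.sum_ite_eq', Finset.mem_univ, if_true, one_mul, neg_mul, Finset.sum_filter]
  have e3 : ∑ v, E v a * ((γp w j v - γm w j v) - (θp w v - θm w v)) =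
      ∑ v, E v a * γp w j v - ∑ v, E v a * γm w j v - ∑ v, E v a * θp w v
        + ∑ v, E v a * θm w v := by
    rw [← Finset.sum_sub_distrib, ← Finset.sum_sub_distrib, ← Finset.sum_add_distrib]
    exact Finset.sum_congr rfl fun _ _ => by ring
  have e4 : (∑ k, if jc k = j ∧ ic k = a then βp w k - βm w k else 0) =
      (∑ k, if jc k = j ∧ ic k = a then βp w k else 0)
       + (∑ k, if jc k = j ∧ ic k = a then - βm w k else 0) := by
    rw [← Finset.sum_add_distrib]
    exact Finset.sum_congr rfl fun _ _ => by split_ifs <;> ring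
  rw [e3, e4]
  simp only [Finset.sum_neg_distrib]
  ring

open ECRWeights in
theorem memCl_iff {M V A K : Type} [Fintype M] [Fintype V] [Fintype A] [Fintype K]
    [DecidableEq M] [DecidableEq A] [DecidableEq K]
    (E : V → A → ℝ) (jc : K → M) (ic : K → A) (l : K) (s : ℝ) (w : ECRWeights M V A K) :
    memCl E jc ic l s w ↔ (∀ c, 0 ≤ colVal w c) ∧ βp w l = 0 ∧ βm w l = 0 ∧
      ∀ a j, ∑ c, ecrCoef E jc ic c (a, j) * colVal w c
        = s * (if (a, j) = (ic l, jc l) then 1 else 0) := by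
  simp only [memCl, ecr_row, Sum.forall, Prod.forall, colVal, Sum.elim_inl, Sum.elim_inr,
    and_assoc]

theorem ecr_sum_support {C : Type} [Fintype C] (a x : C → ℝ) (hx : ∀ c, 0 ≤ x c)
    (F : ℝ → ℝ) (hF : F 0 = 0) (S : Finset C) (hS : ∀ c, c ∈ S ↔ 0 < x c ∧ a c ≠ 0) :
    ∑ c, a c * F (x c) = ∑ c ∈ S, a c * F (x c) := by
  symm
  apply Finset.sum_subset (Finset.subset_univ _)
  intro c _ hc
  rw [hS] at hc
  by_cases h0 : a c = 0
  · simp [h0]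
  · have : x c = 0 := le_antisymm (not_lt.1 fun h => hc ⟨h, h0⟩) (hx c)
    simp [this, hF]

theorem ecr_pair {C : Type} [Fintype C] (a x : C → ℝ) (hx : ∀ c, 0 ≤ x c)
    (ha : ∀ c, a c = 0 ∨ a c = 1 ∨ a c = -1)
    (F : ℝ → ℝ) (hF : F 0 = 0) (hn : Set.ncard {c | 0 < x c ∧ a c ≠ 0} ≤ 2)
    (h0 : ∑ c, a c * x c = 0) : ∑ c, a c * F (x c) = 0 := by
  classical
  let S : Finset C := Finset.univ.filter (fun c => 0 < x c ∧ a c ≠ 0)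
  have hS : ∀ c, c ∈ S ↔ 0 < x c ∧ a c ≠ 0 := by simp [S]
  have hc : S.card ≤ 2 := by
    rw [← Set.ncard_coe_finset]
    simpa [S] using hn
  have h1 := ecr_sum_support a x hx id rfl S hS
  simp only [id] at h1
  rw [h0] at h1
  rw [ecr_sum_support a x hx F hF S hS]
  have h3 : S.card = 0 ∨ S.card = 1 ∨ S.card = 2 := by omega
  rcases h3 with h3 | h3 | h3
  · rw [Finset.card_eq_zero] at h3
    simp [h3]
  · obtain ⟨c, h3⟩ := Finset.card_eq_one.1 h3
    have := (hS c).1 (by simp [h3])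
    simp only [h3, Finset.sum_singleton] at h1
    exact absurd h1.symm (mul_ne_zero this.2 this.1.ne')
  · obtain ⟨c, d, hcd, h3⟩ := Finset.card_eq_two.1 h3
    have p := (hS c).1 (by simp [h3])
    have q := (hS d).1 (by simp [h3])
    rw [h3, Finset.sum_pair hcd] at h1 ⊢
    rcases ha c with u | u | u
    · exact absurd u p.2
    all_goals
      rcases ha d with v | v | v
      · exact absurd v q.2
      all_goals
        rw [u, v] at h1 ⊢
        first
        | exfalso; linarith [p.1, q.1]
        | have : x c = x d := by linarith
          rw [this]; ring

theorem ecr_base {C : Type} [Fintype C] (a x : C → ℝ) (hx : ∀ c, 0 ≤ x c)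
    (ha : ∀ c, a c = 0 ∨ a c = 1 ∨ a c = -1)
    (F : ℝ → ℝ) (hF : F 0 = 0) (hF1 : F 1 = 0) (hn : Set.ncard {c | 0 < x c ∧ a c ≠ 0} ≤ 1)
    (s : ℝ) (hs : s = 1 ∨ s = -1)
    (h0 : ∑ c, a c * x c = s) : ∑ c, a c * F (x c) = 0 := by
  classical
  let S : Finset C := Finset.univ.filter (fun c => 0 < x c ∧ a c ≠ 0)
  have hS : ∀ c, c ∈ S ↔ 0 < x c ∧ a c ≠ 0 := by simp [S]
  have hc : S.card ≤ 1 := by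
    rw [← Set.ncard_coe_finset]
    simpa [S] using hn
  have h1 := ecr_sum_support a x hx id rfl S hS
  simp only [id] at h1
  rw [h0] at h1
  rw [ecr_sum_support a x hx F hF S hS]
  have h3 : S.card = 0 ∨ S.card = 1 := by omega
  rcases h3 with h3 | h3
  · rw [Finset.card_eq_zero] at h3
    simp [h3]
  · obtain ⟨c, h3⟩ := Finset.card_eq_one.1 h3
    have p := (hS c).1 (by simp [h3])
    rw [h3, Finset.sum_singleton] at h1 ⊢
    have : x c = 1 := by
      rcases ha c with u | u | u
      · exact absurd u p.2
      all_goals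
        rw [u] at h1
        rcases hs with hs | hs <;> linarith [p.1]
    rw [this, hF1, mul_zero]

/-- Every extreme point of `C^l` (the general-`m` cone over a network polytope) that
satisfies the pairwise-cancellation property has all of its components in `{0, 1}`: the
aggregation weights of all constraints used in an EC&R assignment obtained through pairwise
cancellation are equal to `1`. -/
theorem extremePoint_pairwiseCancellation_zero_one
    {M V A K : Type} [Fintype M] [Fintype V] [Fintype A] [Fintype K]
    [DecidableEq M] [DecidableEq V] [DecidableEq A] [DecidableEq K]
    (t h : A → V) (hloop : ∀ a, t a ≠ h a)
    (E : V → A → ℝ)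
    (hE : ∀ v a, E v a = (if t a = v then (1 : ℝ) else 0) - (if h a = v then 1 else 0))
    (jc : K → M) (ic : K → A) (l : K) (s : ℝ) (hs : s = 1 ∨ s = -1)
    (w : ECRWeights M V A K)
    (hw : w ∈ Set.extremePoints ℝ {w' : ECRWeights M V A K | memCl E jc ic l s w'})
    (hpc : PairwiseCancellation E jc ic l w) :
    ∀ c : ECRCol M V A K, colVal w c = 0 ∨ colVal w c = 1 := by
  intro c₀
  by_contra hcon
  push Not at hcon
  obtain ⟨hc0, hc1⟩ := hcon
  obtain ⟨hmem, hext⟩ := mem_extremePoints.1 hw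
  have hm := (memCl_iff E jc ic l s w).1 hmem
  obtain ⟨hnn, hbp, hbm, hrow⟩ := hm
  have hE' : ∀ v a, E v a = 0 ∨ E v a = 1 ∨ E v a = -1 := by
    intro v a
    rw [hE]
    split_ifs <;> simp
  set x := colVal w c₀ with hx
  let F : ℝ → ℝ := fun y => if y = x then y else 0
  have hF0 : F 0 = 0 := by simp [F]
  have hF1 : F 1 = 0 := by simp [F, Ne.symm hc1]
  have hzero : ∀ a j, ∑ c, ecrCoef E jc ic c (a, j) * F (colVal w c) = 0 := by
    intro a j
    obtain ⟨hp2, hp1⟩ := hpc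
    simp only [covers_iff_ecrCoef] at hp1 hp2
    by_cases hb : (a, j) = (ic l, jc l)
    · have h1 := hrow a j
      rw [if_pos hb, mul_one] at h1
      rw [hb] at h1 ⊢
      exact ecr_base _ _ hnn (fun c => ecrCoef_cases E hE' jc ic c _) F hF0 hF1 hp1 s hs h1
    · have h1 := hrow a j
      rw [if_neg hb, mul_zero] at h1
      exact ecr_pair _ _ hnn (fun c => ecrCoef_cases E hE' jc ic c _) F hF0 (hp2 _) h1
  have key : ∀ e : ℝ, -1 ≤ e → memCl E jc ic l s (ecrMap (fun y => y + e * F y) w) := by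
    intro e he
    rw [memCl_iff]
    refine ⟨?_, ?_, ?_, ?_⟩
    · intro c
      rw [colVal_ecrMap]
      have := hnn c
      simp only [F]
      split_ifs
      · nlinarith
      · simpa using this
    · change ECRWeights.βp w l + e * F (ECRWeights.βp w l) = 0
      rw [hbp, hF0]; ring
    · change ECRWeights.βm w l + e * F (ECRWeights.βm w l) = 0
      rw [hbm, hF0]; ring
    · intro a j
      rw [← hrow a j]
      simp only [colVal_ecrMap, mul_add, Finset.sum_add_distrib]
      rw [add_eq_left]
      have : ∀ c, ecrCoef E jc ic c (a, j) * (e * F (colVal w c)) =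
          e * (ecrCoef E jc ic c (a, j) * F (colVal w c)) := fun c => by ring
      simp only [this, ← Finset.mul_sum, hzero, mul_zero]
  have hseg : w ∈ openSegment ℝ (ecrMap (fun y => y + 1 * F y) w)
      (ecrMap (fun y => y + (-1) * F y) w) := by
    refine ⟨1/2, 1/2, by norm_num, by norm_num, by norm_num, ?_⟩
    have : ∀ y : ℝ, (1/2 : ℝ) * (y + 1 * F y) + (1/2) * (y + (-1) * F y) = y := fun y => by ring
    refine Prod.ext ?_ (Prod.ext ?_ (Prod.ext ?_ (Prod.ext ?_ (Prod.ext ?_ (Prod.ext ?_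
      (Prod.ext ?_ (Prod.ext ?_ (Prod.ext ?_ ?_))))))))
    any_goals
      funext i
      exact this _
    all_goals
      funext i k
      exact this _
  have heq := (hext _ (key 1 (by norm_num)) _ (key (-1) (by norm_num)) hseg).1
  have := colVal_ecrMap (fun y => y + 1 * F y) w c₀
  rw [heq, ← hx] at this
  simp [F] at this
  exact hc0 this
end

section
/- Let π̄ be an extreme point of C^l (the general-m cone over a network polytope) satisfying the pairwise-cancellation property, and define the support sets Ĩ_j = {v ∈ V : γ_j⁺(v) > 0 or γ_j⁻(v) > 0}, Ĩ = {v ∈ V : θ⁺(v) > 0 or θ⁻(v) > 0}, and J̃ = {a ∈ A : λ(a) > 0 or μ(a) > 0}. Then: (i) the base arc i' has at most one endpoint in Ĩ ∪ Ĩ_{j'}, and if i' ∈ J̃ then i' has no endpoint in Ĩ ∪ Ĩ_{j'} (the base arc cannot simultaneously be a connection arc and be incident to a used node); (ii) for every j ∈ M, every arc a ∈ J̃ has at most one endpoint in Ĩ ∪ Ĩ_j; (iii) for every j ∈ M, every node v ∈ Ĩ ∩ Ĩ_j is adjacent to no other node of Ĩ ∩ Ĩ_j and is incident to no arc of J̃,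 and if j = j' then moreover v is not incident to the arc i'. -/
theorem ecr_two {α : Type*} [Finite α] {S : Set α} (hS : S.ncard ≤ 1) {x y : α}
    (hx : x ∈ S) (hy : y ∈ S) : x = y :=
  (Set.ncard_le_one (Set.toFinite S)).1 hS x hx y hy

theorem ecr_three {α : Type*} [Finite α] {S : Set α} (hS : S.ncard ≤ 2) {x y z : α}
    (hx : x ∈ S) (hy : y ∈ S) (hz : z ∈ S) (hxy : x ≠ y) (hxz : x ≠ z) (hyz : y ≠ z) :
    False := by
  have := (Set.two_lt_ncard_iff (Set.toFinite S)).2 ⟨x, y, z, hx, hy, hz, hxy, hxz, hyz⟩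
  omega

open ECRWeights in
/-- The kind of a column: node column (private or shared) or other. -/
def ecrKind {M V A K : Type} : ECRCol M V A K → Option (V × Bool) :=
  Sum.elim (fun jv => some (jv.2, true))
    (Sum.elim (fun jv => some (jv.2, true))
      (Sum.elim (fun _ => none)
        (Sum.elim (fun _ => none)
          (Sum.elim (fun v => some (v, false))
            (Sum.elim (fun v => some (v, false))
              (fun _ => none))))))

open ECRWeights in
/-- At an extreme point of `C^l` (the general-`m` cone over a network polytope) satisfying
the pairwise-cancellation property, with support sets
`Ĩ_j = {v : γ_j⁺ v > 0 ∨ γ_j⁻ v > 0}`, `Ĩ = {v : θ⁺ v > 0 ∨ θ⁻ v > 0}` and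
`J̃ = {a : λ a > 0 ∨ μ a > 0}`:
(i) the base arc `i' = ic l` has at most one endpoint in `Ĩ ∪ Ĩ_{j'}`, and if `i' ∈ J̃`
then `i'` has no endpoint in `Ĩ ∪ Ĩ_{j'}`;
(ii) for every `j`, every arc of `J̃` has at most one endpoint in `Ĩ ∪ Ĩ_j`;
(iii) for every `j`, every node of `Ĩ ∩ Ĩ_j` is adjacent to no other node of `Ĩ ∩ Ĩ_j` and
is incident to no arc of `J̃`, and if `j = j'` then moreover it is not incident to `i'`. -/
theorem extremePoint_pairwiseCancellation_support_structure
    {M V A K : Type} [Fintype M] [Fintype V] [Fintype A] [Fintype K]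
    [DecidableEq M] [DecidableEq V] [DecidableEq A] [DecidableEq K]
    (t h : A → V) (hloop : ∀ a, t a ≠ h a)
    (E : V → A → ℝ)
    (hE : ∀ v a, E v a = (if t a = v then (1 : ℝ) else 0) - (if h a = v then 1 else 0))
    (jc : K → M) (ic : K → A) (l : K) (s : ℝ) (hs : s = 1 ∨ s = -1)
    (w : ECRWeights M V A K)
    (hw : w ∈ Set.extremePoints ℝ {w' : ECRWeights M V A K | memCl E jc ic l s w'})
    (hpc : PairwiseCancellation E jc ic l w)
    (Ij : M → Set V) (hIj : ∀ j, Ij j = {v | 0 < γp w j v ∨ 0 < γm w j v})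
    (I : Set V) (hI : I = {v | 0 < θp w v ∨ 0 < θm w v})
    (J : Set A) (hJ : J = {a | 0 < lam w a ∨ 0 < mu w a}) :
    (¬(t (ic l) ∈ I ∪ Ij (jc l) ∧ h (ic l) ∈ I ∪ Ij (jc l)) ∧
      (ic l ∈ J → t (ic l) ∉ I ∪ Ij (jc l) ∧ h (ic l) ∉ I ∪ Ij (jc l))) ∧
    (∀ j : M, ∀ a ∈ J, ¬(t a ∈ I ∪ Ij j ∧ h a ∈ I ∪ Ij j)) ∧
    (∀ j : M, ∀ v ∈ I ∩ Ij j,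
      (∀ v' ∈ I ∩ Ij j, v' ≠ v →
        ∀ a, ¬((t a = v ∨ h a = v) ∧ (t a = v' ∨ h a = v'))) ∧
      (∀ a ∈ J, ¬(t a = v ∨ h a = v)) ∧
      (j = jc l → ¬(t (ic l) = v ∨ h (ic l) = v))) := by
  obtain ⟨h2, h1⟩ := hpc
  have hEne : ∀ v a, (t a = v ∨ h a = v) → E v a ≠ 0 := by
    intro v a hva
    have := hloop a
    rw [hE]
    rcases hva with rfl | rfl
    · simp [this.symm]
    · simp [this]
  -- columns
  have cI : ∀ v ∈ I, ∀ a j, (t a = v ∨ h a = v) →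
      ∃ c : ECRCol M V A K, ecrKind c = some (v, false) ∧
        c ∈ {c | 0 < colVal w c ∧ covers E jc ic c (a, j)} := by
    intro v hv a j hva
    rw [hI] at hv
    rcases hv with hv | hv
    · exact ⟨.inr (.inr (.inr (.inr (.inl v)))), rfl, hv, hEne v a hva⟩
    · exact ⟨.inr (.inr (.inr (.inr (.inr (.inl v))))), rfl, hv, hEne v a hva⟩
  have cIj : ∀ j, ∀ v ∈ Ij j, ∀ a, (t a = v ∨ h a = v) →
      ∃ c : ECRCol M V A K, ecrKind c = some (v, true) ∧
        c ∈ {c | 0 < colVal w c ∧ covers E jc ic c (a, j)} := by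
    intro j v hv a hva
    rw [hIj] at hv
    rcases hv with hv | hv
    · exact ⟨.inl (j, v), rfl, hv, rfl, hEne v a hva⟩
    · exact ⟨.inr (.inl (j, v)), rfl, hv, rfl, hEne v a hva⟩
  have cJ : ∀ a ∈ J, ∀ j, ∃ c : ECRCol M V A K, ecrKind c = none ∧
        c ∈ {c | 0 < colVal w c ∧ covers E jc ic c (a, j)} := by
    intro a ha j
    rw [hJ] at ha
    rcases ha with ha | ha
    · exact ⟨.inr (.inr (.inr (.inr (.inr (.inr (.inl a)))))), rfl, ha, rfl⟩
    · exact ⟨.inr (.inr (.inr (.inr (.inr (.inr (.inr (.inl a))))))), rfl, ha, rfl⟩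
  have cU : ∀ j, ∀ v ∈ I ∪ Ij j, ∀ a, (t a = v ∨ h a = v) →
      ∃ (c : ECRCol M V A K) (b : Bool), ecrKind c = some (v, b) ∧
        c ∈ {c | 0 < colVal w c ∧ covers E jc ic c (a, j)} := by
    intro j v hv a hva
    rcases hv with hv | hv
    · obtain ⟨c, hc⟩ := cI v hv a j hva
      exact ⟨c, _, hc⟩
    · obtain ⟨c, hc⟩ := cIj j v hv a hva
      exact ⟨c, _, hc⟩
  have key : ∀ v ∈ I ∪ Ij (jc l), (t (ic l) = v ∨ h (ic l) = v) → ic l ∉ J := by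
    intro v hv hva hJl
    obtain ⟨c, b, hc, hcS⟩ := cU _ v hv _ hva
    obtain ⟨d, hd, hdS⟩ := cJ _ hJl (jc l)
    have := ecr_two h1 hcS hdS
    subst this
    simp [hc] at hd
  refine ⟨⟨?_, ?_⟩, ?_, ?_⟩
  · rintro ⟨ht, hh⟩
    obtain ⟨c, b, hc, hcS⟩ := cU _ _ ht _ (Or.inl rfl)
    obtain ⟨d, b', hd, hdS⟩ := cU _ _ hh _ (Or.inr rfl)
    have := ecr_two h1 hcS hdS
    subst this
    rw [hc] at hd
    simp only [Option.some.injEq, Prod.mk.injEq] at hd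
    exact hloop _ hd.1
  · intro hJl
    exact ⟨fun hv => key _ hv (Or.inl rfl) hJl, fun hv => key _ hv (Or.inr rfl) hJl⟩
  · rintro j a ha ⟨ht, hh⟩
    obtain ⟨c, b, hc, hcS⟩ := cU _ _ ht _ (Or.inl rfl)
    obtain ⟨d, b', hd, hdS⟩ := cU _ _ hh _ (Or.inr rfl)
    obtain ⟨e, he, heS⟩ := cJ _ ha j
    refine ecr_three (h2 (a, j)) hcS hdS heS ?_ ?_ ?_
    · rintro rfl
      rw [hc] at hd
      simp only [Option.some.injEq, Prod.mk.injEq] at hd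
      exact hloop _ hd.1
    · rintro rfl
      simp [hc] at he
    · rintro rfl
      simp [hd] at he
  · rintro j v ⟨hvI, hvj⟩
    refine ⟨?_, ?_, ?_⟩
    · rintro v' ⟨hvI', -⟩ hne a ⟨hva, hva'⟩
      obtain ⟨c, hc, hcS⟩ := cI _ hvI a j hva
      obtain ⟨d, hd, hdS⟩ := cIj _ _ hvj a hva
      obtain ⟨e, he, heS⟩ := cI _ hvI' a j hva'
      refine ecr_three (h2 (a, j)) hcS hdS heS ?_ ?_ ?_
      · rintro rfl
        simp [hc] at hd
      · rintro rfl
        simp [hc, hne.symm] at he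
      · rintro rfl
        simp [hd] at he
    · intro a ha hva
      obtain ⟨c, hc, hcS⟩ := cI _ hvI a j hva
      obtain ⟨d, hd, hdS⟩ := cIj _ _ hvj a hva
      obtain ⟨e, he, heS⟩ := cJ _ ha j
      refine ecr_three (h2 (a, j)) hcS hdS heS ?_ ?_ ?_
      · rintro rfl
        simp [hc] at hd
      · rintro rfl
        simp [hc] at he
      · rintro rfl
        simp [hd] at he
    · rintro rfl hva
      obtain ⟨c, hc, hcS⟩ := cI _ hvI _ (jc l) hva
      obtain ⟨d, hd, hdS⟩ := cIj _ _ hvj _ hva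
      have := ecr_two h1 hcS hdS
      subst this
      simp [hc] at hd
end
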